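/- A quasigroup is distributive if and only if it is trimedial and idempotent. -/

import Mathlib

/-- A quasigroup: a set with a binary operation whose left and right
translations are bijections. -/
structure Quasigroup (Q : Type) where
  mul : Q → Q → Q
  leftBij : ∀ x, Function.Bijective fun y => mul x y
  rightBij : ∀ x, Function.Bijective fun y => mul y x

namespace Quasigroup

/-- Mediality: (x*y)*(u*v) = (x*u)*(y*v). -/
def Medial {Q : Type} (q : Quasigroup Q) : Prop :=
  ∀ x y u v, q.mul (q.mul x y) (q.mul u v) = q.mul (q.mul x u) (q.mul y v)

/-- Distributivity: both left and right self-distributivity. -/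
def Distributive {Q : Type} (q : Quasigroup Q) : Prop :=
  (∀ x y z, q.mul x (q.mul y z) = q.mul (q.mul x y) (q.mul x z)) ∧
  (∀ x y z, q.mul (q.mul x y) z = q.mul (q.mul x z) (q.mul y z))

/-- Idempotency: x*x = x. -/
def Idempotent {Q : Type} (q : Quasigroup Q) : Prop := ∀ x, q.mul x x = x

/-- Mendelsohn quasigroup: idempotent and semisymmetric. -/
def Mendelsohn {Q : Type} (q : Quasigroup Q) : Prop :=
  Idempotent q ∧ ∀ x y, q.mul y (q.mul x y) = x

/-- A subquasigroup: a subset closed under multiplication, left division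
and right division. -/
def IsSubquasigroup {Q : Type} (q : Quasigroup Q) (S : Set Q) : Prop :=
  (∀ x ∈ S, ∀ y ∈ S, q.mul x y ∈ S) ∧
  (∀ x ∈ S, ∀ z ∈ S, ∀ y, q.mul x y = z → y ∈ S) ∧
  (∀ y ∈ S, ∀ z ∈ S, ∀ x, q.mul x y = z → x ∈ S)

/-- The smallest subquasigroup containing `a`, `b`, `c`. -/
def genSet {Q : Type} (q : Quasigroup Q) (a b c : Q) : Set Q :=
  ⋂₀ {S : Set Q | IsSubquasigroup q S ∧ a ∈ S ∧ b ∈ S ∧ c ∈ S}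

/-- Trimediality: every subquasigroup generated by three elements is medial. -/
def Trimedial {Q : Type} (q : Quasigroup Q) : Prop :=
  ∀ a b c : Q, ∀ x ∈ genSet q a b c, ∀ y ∈ genSet q a b c,
    ∀ u ∈ genSet q a b c, ∀ v ∈ genSet q a b c,
      q.mul (q.mul x y) (q.mul u v) = q.mul (q.mul x u) (q.mul y v)

/-- Isomorphism of quasigroups. -/
def Iso {Q₁ Q₂ : Type} (q₁ : Quasigroup Q₁) (q₂ : Quasigroup Q₂) : Prop :=
  ∃ f : Q₁ ≃ Q₂, ∀ x y, f (q₁.mul x y) = q₂.mul (f x) (f y)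

end Quasigroup

/-!
For distributive `q` every translation is an endomorphism, so in each of its four variables the
medial law `(x * y) * (u * v) = (x * u) * (y * v)` says that two endomorphisms agree. The points
where they agree form a subquasigroup; hence the medial law on the subquasigroup generated by
`a, b, c` need only be checked for `x, y, u, v ∈ {a, b, c}`. Then two of the four variables
coincide, and distributivity and idempotency settle every case except `v = x`. That case,
`(x * y) * (u * x) = (x * u) * (y * x)`, is the commutativity of the operation
`(y, u) ↦ (x * y) * (u * x)`, a form of Belousov's theorem that the loop isotopes of `q` are
commutative.
-/

namespace Quasigroup

/-- Homomorphisms of quasigroups, as a predicate on maps; used to make subquasigroups as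
equalizers. -/
def IsHom {Q R : Type} (q : Quasigroup Q) (r : Quasigroup R) (f : Q → R) : Prop :=
  ∀ x y, f (q.mul x y) = r.mul (f x) (f y)

namespace IsHom

theorem comp {Q R S : Type} {q : Quasigroup Q} {r : Quasigroup R} {s : Quasigroup S}
    {g : R → S} {f : Q → R} (hg : IsHom r s g) (hf : IsHom q r f) : IsHom q s (g ∘ f) :=
  fun x y => (congrArg g (hf x y)).trans (hg (f x) (f y))

variable {Q R : Type} {q : Quasigroup Q} {r : Quasigroup R} {f g : Q → R}

theorem isSubquasigroup_eqLocus (hf : IsHom q r f) (hg : IsHom q r g) :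
    IsSubquasigroup q {x | f x = g x} := by
  refine ⟨fun x (hx : f x = g x) y (hy : f y = g y) => ?_,
    fun x (hx : f x = g x) z (hz : f z = g z) y hxy => ?_,
    fun y (hy : f y = g y) z (hz : f z = g z) x hxy => ?_⟩
  · change f (q.mul x y) = g (q.mul x y)
    rw [hf, hg, hx, hy]
  · rw [← hxy, hf, hg, hx] at hz
    exact (r.leftBij _).injective hz
  · rw [← hxy, hf, hg, hy] at hz
    exact (r.rightBij _).injective hz

theorem eqOn_genSet (hf : IsHom q r f) (hg : IsHom q r g) {a b c : Q}
    (h : Set.EqOn f g {a, b, c}) : Set.EqOn f g (genSet q a b c) :=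
  Set.sInter_subset_of_mem
    ⟨hf.isSubquasigroup_eqLocus hg, h (by simp), h (by simp), h (by simp)⟩

end IsHom

section

variable {Q : Type} {q : Quasigroup Q}

local notation:70 x:70 " ◇ " y:71 => Quasigroup.mul q x y

theorem subset_genSet (a b c : Q) : {a, b, c} ⊆ genSet q a b c := by
  rintro x (rfl | rfl | rfl) S ⟨-, ha, hb, hc⟩ <;> assumption

/-- The operation `(y, u) ↦ (e * y) * (u * e)`. For distributive `q` it equals `e * ((y + u) * e)`,
where `y + u = (y / e) * (e \ u)` is the loop isotope of `q` with unit `e`; this form avoids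
divisions. -/
def isotope (q : Quasigroup Q) (e y u : Q) : Q := q.mul (q.mul e y) (q.mul u e)

theorem bijective_isotope_left (q : Quasigroup Q) (e u : Q) :
    Function.Bijective fun y => isotope q e y u :=
  (q.rightBij (q.mul u e)).comp (q.leftBij e)

namespace Distributive

theorem isHom_mul_left (h : Distributive q) (x : Q) : IsHom q q (x ◇ ·) := h.1 x

theorem isHom_mul_right (h : Distributive q) (y : Q) : IsHom q q (· ◇ y) :=
  fun x z => h.2 x z y

theorem idempotent (h : Distributive q) : Idempotent q :=
  fun x => ((q.rightBij (x ◇ x)).injective (h.1 x x x)).symm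

theorem mul_mul_self_assoc (h : Distributive q) (x y : Q) : x ◇ y ◇ x = x ◇ (y ◇ x) := by
  rw [h.2, h.idempotent]

theorem isHom_isotope_left (h : Distributive q) (e u : Q) :
    IsHom q q fun y => isotope q e y u :=
  (h.isHom_mul_right (u ◇ e)).comp (h.isHom_mul_left e)

theorem isHom_isotope_right (h : Distributive q) (e y : Q) : IsHom q q (isotope q e y) :=
  (h.isHom_mul_left (e ◇ y)).comp (h.isHom_mul_right e)

theorem isotope_self_comm (h : Distributive q) (e x : Q) :
    isotope q e e x = isotope q e x e := by
  simp only [isotope, h.idempotent e, h.mul_mul_self_assoc e x]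

theorem isotope_mul_self (h : Distributive q) (e y u : Q) :
    isotope q e y u ◇ e = isotope q e (y ◇ e) (u ◇ e) := by
  simp only [isotope, h.2 (e ◇ y) (u ◇ e) e, h.mul_mul_self_assoc e y]

theorem isotope_comm (h : Distributive q) (e a x : Q) :
    isotope q e a x = isotope q e x a := by
  obtain ⟨t, ht : isotope q e t a = isotope q e a x⟩ :=
    (bijective_isotope_left q e a).surjective (isotope q e a x)
  obtain ⟨t', ht' : t' ◇ e = t⟩ := (q.rightBij e).surjective t
  obtain ⟨x', hx' : x' ◇ e = x⟩ := (q.rightBij e).surjective x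
  have comm_of_quotients : isotope q e t' a = isotope q e a x' := by
    refine (q.rightBij (isotope q e e a)).injective ?_
    calc isotope q e t' a ◇ isotope q e e a
        = isotope q e (t' ◇ e) a := (h.isHom_isotope_left e a t' e).symm
      _ = isotope q e a (x' ◇ e) := by rw [ht', ht, hx']
      _ = isotope q e a x' ◇ isotope q e a e := h.isHom_isotope_right e a x' e
      _ = isotope q e a x' ◇ isotope q e e a := by rw [h.isotope_self_comm]
  have comm_mul_self : isotope q e t (a ◇ e) = isotope q e (a ◇ e) x := by
    rw [← ht', ← hx', ← h.isotope_mul_self, ← h.isotope_mul_self, comm_of_quotients]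
  have t_eq_x : t = x := by
    refine (bijective_isotope_left q e e).injective
      ((q.leftBij (isotope q e a x)).injective ?_)
    calc isotope q e a x ◇ isotope q e t e
        = isotope q e t a ◇ isotope q e t e := by rw [ht]
      _ = isotope q e t (a ◇ e) := (h.isHom_isotope_right e t a e).symm
      _ = isotope q e (a ◇ e) x := comm_mul_self
      _ = isotope q e a x ◇ isotope q e e x := h.isHom_isotope_left e x a e
      _ = isotope q e a x ◇ isotope q e x e := by rw [h.isotope_self_comm]
  rw [← ht, t_eq_x]

theorem mul_mul_mul_comm_of_eq (h : Distributive q) {x y u v : Q}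
    (heq : x = y ∨ x = u ∨ x = v ∨ y = u ∨ y = v ∨ u = v) :
    x ◇ y ◇ (u ◇ v) = x ◇ u ◇ (y ◇ v) := by
  rcases heq with rfl | rfl | rfl | rfl | rfl | rfl
  · rw [h.idempotent, h.1]
  · rw [← h.1, h.idempotent]
  · exact h.isotope_comm x y u
  · rfl
  · rw [← h.2, h.idempotent]
  · rw [h.idempotent, h.2]

theorem trimedial (h : Distributive q) : Trimedial q := by
  intro a b c x hx y hy u hu v hv
  have on_generators : ∀ x ∈ ({a, b, c} : Set Q), ∀ y ∈ ({a, b, c} : Set Q),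
      ∀ u ∈ ({a, b, c} : Set Q), ∀ v ∈ ({a, b, c} : Set Q),
      x ◇ y ◇ (u ◇ v) = x ◇ u ◇ (y ◇ v) := by
    intro x hx y hy u hu v hv
    refine h.mul_mul_mul_comm_of_eq ?_
    simp only [Set.mem_insert_iff, Set.mem_singleton_iff] at hx hy hu hv
    grind
  refine ((h.isHom_mul_right (u ◇ v)).comp (h.isHom_mul_right y)).eqOn_genSet
    ((h.isHom_mul_right (y ◇ v)).comp (h.isHom_mul_right u)) (fun x hx => ?_) hx
  refine ((h.isHom_mul_right (u ◇ v)).comp (h.isHom_mul_left x)).eqOn_genSet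
    ((h.isHom_mul_left (x ◇ u)).comp (h.isHom_mul_right v)) (fun y hy => ?_) hy
  refine ((h.isHom_mul_left (x ◇ y)).comp (h.isHom_mul_right v)).eqOn_genSet
    ((h.isHom_mul_right (y ◇ v)).comp (h.isHom_mul_left x)) (fun u hu => ?_) hu
  refine ((h.isHom_mul_left (x ◇ y)).comp (h.isHom_mul_left u)).eqOn_genSet
    ((h.isHom_mul_left (x ◇ u)).comp (h.isHom_mul_left y)) (fun v hv => ?_) hv
  exact on_generators x hx y hy u hu v hv

end Distributive

theorem Trimedial.distributive (h : Trimedial q) (hi : Idempotent q) : Distributive q := by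
  refine ⟨fun x y z => ?_, fun x y z => ?_⟩ <;>
    have hmem := subset_genSet (q := q) x y z
  · have hmedial := h x y z x (hmem (by simp)) x (hmem (by simp)) y (hmem (by simp))
      z (hmem (by simp))
    rwa [hi] at hmedial
  · have hmedial := h x y z x (hmem (by simp)) y (hmem (by simp)) z (hmem (by simp))
      z (hmem (by simp))
    rwa [hi z] at hmedial

end

end Quasigroup

open Quasigroup in
/-- Belousov: a quasigroup is distributive iff it is trimedial and idempotent. -/
theorem stmt {Q : Type} (q : Quasigroup Q) :
    Distributive q ↔ Trimedial q ∧ Idempotent q :=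
  ⟨fun h => ⟨h.trimedial, h.idempotent⟩, fun ⟨ht, hi⟩ => ht.distributive hi⟩
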